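/- arXiv:1703.04422 — 4 statements merged into one kernel-verified Lean document; each statement's English description precedes it below -/
import Mathlib

section
/- Let H be a complex Hilbert space, d ≥ 2, X ⊆ ℕ^d a monotone set, and A = (A_1,…,A_d) a commuting row contraction on H such that A^n = 0 for every n ∈ ℕ^d∖X. Then for every complex polynomial Q in d variables, ‖Q(A)‖ ≤ ‖Q(B^X)‖. -/
open scoped BigOperators ComplexConjugate

noncomputable section

namespace DruryArveson

/-- Multi-indices. -/
abbrev Idx (d : ℕ) := Fin d → ℕ

/-- The weight `β(n) = |n|!/n!`. -/
def beta (d : ℕ) (n : Idx d) : ℝ :=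
  ((∑ j, n j).factorial : ℝ) / ∏ j, ((n j).factorial : ℝ)

/-- standard basis multi-index `e_j`. -/
def e (d : ℕ) (j : Fin d) : Idx d := fun i => if i = j then 1 else 0

/-- A set `X ⊆ ℕ^d` is monotone if its complement is shift invariant. -/
def MonotoneSet (d : ℕ) (X : Set (Idx d)) : Prop :=
  ∀ n, n ∉ X → ∀ j, n + e d j ∉ X

/-- membership in the Drury–Arveson space (coefficientwise). -/
def MemHd (d : ℕ) (a : Idx d → ℂ) : Prop :=
  Summable fun n => ‖a n‖ ^ 2 / beta d n

/-- the Drury–Arveson norm. -/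
def hdNorm (d : ℕ) (a : Idx d → ℂ) : ℝ :=
  Real.sqrt (∑' n, ‖a n‖ ^ 2 / beta d n)

/-- the Drury–Arveson inner product. -/
def hdInner (d : ℕ) (a b : Idx d → ℂ) : ℂ :=
  ∑' n, a n * conj (b n) / (beta d n : ℂ)

/-- membership in `H_d(X)`. -/
def MemHdX (d : ℕ) (X : Set (Idx d)) (a : Idx d → ℂ) : Prop :=
  (∀ n ∉ X, a n = 0) ∧ MemHd d a

/-- membership in `ℓ²(X, β)`. -/
def MemL2 (d : ℕ) (X : Set (Idx d)) (g : Idx d → ℂ) : Prop :=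
  (∀ n ∉ X, g n = 0) ∧ Summable fun n => ‖g n‖ ^ 2 * beta d n

/-- the norm of `ℓ²(ℕ^d, β)`. -/
def l2Norm (d : ℕ) (g : Idx d → ℂ) : ℝ :=
  Real.sqrt (∑' n, ‖g n‖ ^ 2 * beta d n)

/-- the inner product of `ℓ²(ℕ^d, β)`. -/
def l2Inner (d : ℕ) (g h : Idx d → ℂ) : ℂ :=
  ∑' n, g n * conj (h n) * (beta d n : ℂ)

/-- the compressed backshift `B_j^X = P_X B_j|_{ℓ²(X,β)}`. -/
def BXop (d : ℕ) (X : Set (Idx d)) (j : Fin d) (g : Idx d → ℂ) : Idx d → ℂ :=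
  X.indicator fun n => g (n + e d j)

/-- ordered power `(T_1)^{k_1} ∘ ⋯ ∘ (T_d)^{k_d}` of a `d`-tuple of maps. -/
def opPow (d : ℕ) {α : Type*} (T : Fin d → (α → α)) (k : Idx d) : α → α :=
  (List.ofFn fun j => (T j)^[k j]).foldr (· ∘ ·) id

/-- multiplication by `z_j` on coefficients. -/
def Mop (d : ℕ) (j : Fin d) (a : Idx d → ℂ) : Idx d → ℂ :=
  fun n => if 0 < n j then a (n - e d j) else 0

/-- the compressed multiplication `M_j^X = P_X M_j|_{H_d(X)}`. -/
def MopX (d : ℕ) (X : Set (Idx d)) (j : Fin d) (a : Idx d → ℂ) : Idx d → ℂ :=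
  X.indicator (Mop d j a)

/-- the Taylor coefficients of a polynomial of `d` variables. -/
def Qhat (d : ℕ) (Q : MvPolynomial (Fin d) ℂ) (n : Idx d) : ℂ :=
  Q.coeff (Finsupp.equivFunOnFinite.symm n)

/-- `Q(T)` for a `d`-tuple of maps on the coefficient space. -/
def polyOp (d : ℕ) (Q : MvPolynomial (Fin d) ℂ)
    (T : Fin d → ((Idx d → ℂ) → (Idx d → ℂ))) (a : Idx d → ℂ) : Idx d → ℂ :=
  fun n => ∑ k ∈ Q.support, Q.coeff k * opPow d T (⇑k) a n

/-- operator norm of a map with respect to the `ℓ²(X,β)` norm. -/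
def opNormL2 (d : ℕ) (X : Set (Idx d)) (T : (Idx d → ℂ) → (Idx d → ℂ)) : ℝ :=
  sInf {C | 0 ≤ C ∧ ∀ g, MemL2 d X g → l2Norm d (T g) ≤ C * l2Norm d g}

/-- operator norm of a map with respect to the `H_d(X)` norm. -/
def opNormHdX (d : ℕ) (X : Set (Idx d)) (T : (Idx d → ℂ) → (Idx d → ℂ)) : ℝ :=
  sInf {C | 0 ≤ C ∧ ∀ a, MemHdX d X a → hdNorm d (T a) ≤ C * hdNorm d a}

/-- coefficients of the product `φ · f` of two power series. -/
def mconv (d : ℕ) (φ a : Idx d → ℂ) (m : Idx d) : ℂ :=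
  ∑ k ∈ Finset.Iic m, φ k * a (m - k)

/-- `φ` is a multiplier of `H_d`. -/
def IsMultiplier (d : ℕ) (φ : Idx d → ℂ) : Prop :=
  ∀ a, MemHd d a → MemHd d (mconv d φ a)

/-- the multiplier norm `‖φ‖_{M(H_d)}`. -/
def multNorm (d : ℕ) (φ : Idx d → ℂ) : ℝ :=
  sInf {C | 0 ≤ C ∧ ∀ a, MemHd d a → hdNorm d (mconv d φ a) ≤ C * hdNorm d a}

/-- `A^n = A_1^{n_1} ⋯ A_d^{n_d}` for a tuple of bounded operators. -/
def ApowCLM (d : ℕ) {H : Type*} [NormedAddCommGroup H] [NormedSpace ℂ H]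
    (A : Fin d → H →L[ℂ] H) (n : Idx d) : H →L[ℂ] H :=
  (List.ofFn fun j => A j ^ n j).prod

/-- `Q(A) = ∑ c_k A^k` for a tuple of bounded operators. -/
def QevalCLM (d : ℕ) {H : Type*} [NormedAddCommGroup H] [NormedSpace ℂ H]
    (A : Fin d → H →L[ℂ] H) (Q : MvPolynomial (Fin d) ℂ) : H →L[ℂ] H :=
  ∑ k ∈ Q.support, Q.coeff k • ApowCLM d A ⇑k

/-- monomial `z^n`. -/
def mpow (d : ℕ) (z : Fin d → ℂ) (n : Idx d) : ℂ := ∏ j, z j ^ n j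


/-! ### The weight -/

theorem beta_pos (d : ℕ) (n : Idx d) : 0 < beta d n := by
  unfold beta
  have : 0 < ∏ j, ((n j).factorial : ℝ) :=
    Finset.prod_pos fun j _ => by exact_mod_cast Nat.factorial_pos _
  have h2 : (0 : ℝ) < ((∑ j, n j).factorial : ℝ) := by exact_mod_cast Nat.factorial_pos _
  positivity

theorem sum_add_e (d : ℕ) (n : Idx d) (j : Fin d) : ∑ i, (n + e d j) i = ∑ i, n i + 1 := by
  simp [e, Finset.sum_add_distrib]

theorem beta_zero (d : ℕ) : beta d 0 = 1 := by
  simp [beta]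

theorem prod_fact_add_e (d : ℕ) (n : Idx d) (j : Fin d) :
    ∏ i, (((n + e d j) i).factorial : ℝ) = (n j + 1) * ∏ i, ((n i).factorial : ℝ) := by
  have h : ∀ i, (((n + e d j) i).factorial : ℝ)
      = (if i = j then ((n j : ℝ) + 1) else 1) * ((n i).factorial : ℝ) := by
    intro i
    by_cases hi : i = j
    · subst hi
      simp [e, Nat.factorial_succ]
    · simp [e, hi]
  simp_rw [h, Finset.prod_mul_distrib]
  simp

theorem beta_add_e (d : ℕ) (n : Idx d) (j : Fin d) :
    (((n + e d j) j : ℕ) : ℝ) / ((∑ i, (n + e d j) i : ℕ) : ℝ) * beta d (n + e d j)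
      = beta d n := by
  unfold beta
  rw [prod_fact_add_e, sum_add_e, Nat.factorial_succ]
  have h0 : (∏ i, ((n i).factorial : ℝ)) ≠ 0 :=
    Finset.prod_ne_zero_iff.mpr fun i _ => by exact_mod_cast Nat.factorial_ne_zero _
  have h1 : ((∑ i, n i : ℕ) : ℝ) + 1 ≠ 0 := by positivity
  have h2 : ((n j : ℕ) : ℝ) + 1 ≠ 0 := by positivity
  have h3 : (n + e d j) j = n j + 1 := by simp [e]
  rw [h3]
  push_cast at h1 ⊢
  field_simp

theorem beta_le_add_e (d : ℕ) (n : Idx d) (j : Fin d) : beta d n ≤ beta d (n + e d j) := by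
  rw [← beta_add_e d n j]
  have hp := beta_pos d (n + e d j)
  have : (((n + e d j) j : ℕ) : ℝ) / ((∑ i, (n + e d j) i : ℕ) : ℝ) ≤ 1 := by
    apply div_le_one_of_le₀
    · exact_mod_cast Finset.single_le_sum (f := fun i => (n + e d j) i)
        (fun i _ => Nat.zero_le _) (Finset.mem_univ j)
    · positivity
  nlinarith

theorem sum_smul_e (d : ℕ) (k : Idx d) : ∑ j, k j • e d j = k := by
  ext i
  simp [e, Finset.sum_apply]

theorem beta_le_add (d : ℕ) (n k : Idx d) : beta d n ≤ beta d (n + k) := by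
  have h1 : ∀ (j : Fin d) (t : ℕ) (n : Idx d), beta d n ≤ beta d (n + t • e d j) := by
    intro j t
    induction t with
    | zero => intro n; simp
    | succ t ih =>
      intro n
      rw [succ_nsmul, ← add_assoc]
      exact (ih n).trans (beta_le_add_e d _ j)
  have h2 : ∀ s : Finset (Fin d), beta d n ≤ beta d (n + ∑ j ∈ s, k j • e d j) := by
    intro s
    induction s using Finset.induction_on with
    | empty => simp
    | insert a s ha ih =>
      rw [Finset.sum_insert ha, add_comm (k a • e d a), ← add_assoc]
      exact ih.trans (h1 a _ _)
  have := h2 Finset.univ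
  rwa [sum_smul_e] at this

/-- The weight in extended nonnegative reals. -/
def wt (d : ℕ) (n : Idx d) : ENNReal := ENNReal.ofReal (beta d n)

theorem tsum_shift (d : ℕ) (f : Idx d → ENNReal) :
    ∑' n, wt d n * f n = f 0 + ∑' n, wt d n * ∑ j, f (n + e d j) := by
  have key : ∀ j, ∑' n, wt d n * f (n + e d j)
      = ∑' m : Idx d, ENNReal.ofReal ((m j : ℝ) / ((∑ i, m i : ℕ) : ℝ)) * (wt d m * f m) := by
    intro j
    have hinj : Function.Injective (fun n : Idx d => n + e d j) := add_left_injective _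
    rw [← hinj.tsum_eq (f := fun m : Idx d =>
      ENNReal.ofReal ((m j : ℝ) / ((∑ i, m i : ℕ) : ℝ)) * (wt d m * f m))]
    · apply tsum_congr
      intro n
      rw [← mul_assoc, wt, wt, ← ENNReal.ofReal_mul (by positivity), beta_add_e]
    · intro m hm
      have hmj : m j ≠ 0 := by
        intro h0
        apply hm
        simp [h0]
      refine ⟨m - e d j, ?_⟩
      ext i
      by_cases hi : i = j
      · subst hi
        simp [e]; omega
      · simp [e, hi]
  have h2 : ∑' n, wt d n * ∑ j, f (n + e d j)
      = ∑' m : Idx d, ∑ j, ENNReal.ofReal ((m j : ℝ) / ((∑ i, m i : ℕ) : ℝ)) * (wt d m * f m) := by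
    simp_rw [Finset.mul_sum]
    rw [Summable.tsum_finsetSum (fun _ _ => ENNReal.summable),
      Summable.tsum_finsetSum (fun _ _ => ENNReal.summable)]
    exact Finset.sum_congr rfl fun j _ => key j
  rw [h2]
  have h3 : f 0 = ∑' m : Idx d, if m = 0 then f 0 else 0 := by
    rw [tsum_ite_eq]
  rw [h3, ← ENNReal.tsum_add]
  apply tsum_congr
  intro m
  rw [← Finset.sum_mul, ← ENNReal.ofReal_sum_of_nonneg (fun _ _ => by positivity),
    ← Finset.sum_div]
  by_cases hm : m = 0
  · subst hm
    simp [wt, beta_zero]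
  · have hs : (∑ i, (m i : ℝ)) ≠ 0 := by
      intro h
      apply hm
      have h' : ∑ i, m i = 0 := by exact_mod_cast h
      ext i
      exact (Finset.sum_eq_zero_iff.mp h') i (Finset.mem_univ i)
    push_cast
    rw [div_self hs]
    simp [hm]

open Classical in
theorem tsum_lt_top (d : ℕ) (f : Idx d → ENNReal) (s : ENNReal) (hs : s < 1)
    (hf : ∀ n, f n ≠ ⊤) (h : ∀ n, ∑ j, f (n + e d j) ≤ s * f n) :
    ∑' n, wt d n * f n ≠ ⊤ := by
  have hb : ∀ m : Idx d, ∑ n ∈ Finset.Iic m, wt d n * f n ≤ f 0 / (1 - s) := by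
    intro m
    let F : Idx d → ENNReal := fun n => if n ≤ m then f n else 0
    have hF0 : F 0 = f 0 := by simp [F]
    have hFs : ∀ n, ∑ j, F (n + e d j) ≤ s * F n := by
      intro n
      by_cases hn : n ≤ m
      · have : F n = f n := if_pos hn
        rw [this]
        refine le_trans (Finset.sum_le_sum fun j _ => ?_) (h n)
        simp only [F]
        split_ifs <;> simp
      · have : ∀ j, F (n + e d j) = 0 := fun j =>
          if_neg fun h' => hn (le_trans (le_add_of_nonneg_right (zero_le)) h')
        simp [this]
    have hT : ∑' n, wt d n * F n = ∑ n ∈ Finset.Iic m, wt d n * f n := by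
      rw [tsum_eq_sum (s := Finset.Iic m)]
      · apply Finset.sum_congr rfl
        intro n hn
        simp [F, Finset.mem_Iic.mp hn]
      · intro n hn
        have : ¬ n ≤ m := by simpa using hn
        simp [F, this]
    have hfin : ∑ n ∈ Finset.Iic m, wt d n * f n ≠ ⊤ :=
      (ENNReal.sum_lt_top.mpr fun n _ =>
        ENNReal.mul_lt_top ENNReal.ofReal_lt_top (lt_top_iff_ne_top.mpr (hf n))).ne
    have h1 := tsum_shift d F
    have h2 : ∑' n, wt d n * ∑ j, F (n + e d j) ≤ s * ∑' n, wt d n * F n := by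
      rw [← ENNReal.tsum_mul_left]
      refine ENNReal.tsum_le_tsum fun n => ?_
      calc _ ≤ wt d n * (s * F n) := by gcongr; exact hFs n
        _ = _ := by ring
    set T := ∑ n ∈ Finset.Iic m, wt d n * f n
    rw [hT] at h1 h2
    rw [hF0] at h1
    have h3 : T ≤ f 0 + s * T := by
      calc T = _ := h1
        _ ≤ _ := by gcongr
    rw [ENNReal.le_div_iff_mul_le (Or.inl (tsub_pos_of_lt hs).ne') (Or.inl (by simp)),
      ENNReal.mul_sub (fun _ _ => hfin), mul_one, mul_comm T s]
    exact tsub_le_iff_right.mpr h3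
  have : ∑' n, wt d n * f n ≤ f 0 / (1 - s) := by
    rw [ENNReal.tsum_eq_iSup_sum]
    refine iSup_le fun t => ?_
    refine le_trans (Finset.sum_le_sum_of_subset (t := Finset.Iic (t.sup id)) ?_) (hb _)
    intro n hn
    exact Finset.mem_Iic.mpr (Finset.le_sup (f := id) hn)
  refine ne_top_of_le_ne_top ?_ this
  exact ENNReal.div_ne_top (hf 0) (tsub_pos_of_lt hs).ne'

/-! ### Powers -/

section powers
variable {d : ℕ} {H : Type*} [NormedAddCommGroup H] [NormedSpace ℂ H]

theorem ApowCLM_eq (A : Fin d → H →L[ℂ] H) (n : Idx d) :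
    ApowCLM d A n = ((List.finRange d).map fun j => A j ^ n j).prod := by
  rw [ApowCLM, List.ofFn_eq_map]

theorem ApowCLM_zero (A : Fin d → H →L[ℂ] H) : ApowCLM d A 0 = 1 := by
  rw [ApowCLM_eq]
  simp

theorem ApowCLM_add (A : Fin d → H →L[ℂ] H) (hc : ∀ i j, Commute (A i) (A j)) (n m : Idx d) :
    ApowCLM d A (n + m) = ApowCLM d A n * ApowCLM d A m := by
  simp only [ApowCLM_eq]
  induction List.finRange d with
  | nil => simp
  | cons a l ih =>
    rw [List.map_cons, List.prod_cons, ih, Pi.add_apply, pow_add]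
    simp only [List.map_cons, List.prod_cons]
    have : Commute (A a ^ m a) ((l.map fun j => A j ^ n j).prod) := by
      apply Commute.list_prod_right
      intro x hx
      obtain ⟨j, _, rfl⟩ := List.mem_map.mp hx
      exact (hc a j).pow_pow _ _
    rw [mul_assoc, mul_assoc, ← mul_assoc (A a ^ m a), this.eq]
    simp only [mul_assoc]

theorem ApowCLM_e (A : Fin d → H →L[ℂ] H) (j : Fin d) : ApowCLM d A (e d j) = A j := by
  rw [ApowCLM_eq]
  have h : ∀ l : List (Fin d), l.Nodup →
      (l.map fun i => A i ^ e d j i).prod = if j ∈ l then A j else 1 := by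
    intro l hl
    induction l with
    | nil => simp
    | cons a l ih =>
      obtain ⟨ha, hl'⟩ := List.nodup_cons.mp hl
      rw [List.map_cons, List.prod_cons, ih hl']
      by_cases haj : a = j
      · subst haj
        simp [e, ha]
      · have : ¬ j = a := fun h => haj h.symm
        simp [e, haj, this]
  rw [h _ (List.nodup_finRange d)]
  simp

theorem ApowCLM_smul (A : Fin d → H →L[ℂ] H) (r : ℂ) (n : Idx d) :
    ApowCLM d (fun j => r • A j) n = r ^ (∑ j, n j) • ApowCLM d A n := by
  have h : ∀ l : List (Fin d), (l.map fun j => (r • A j) ^ n j).prod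
      = r ^ ((l.map n).sum) • (l.map fun j => A j ^ n j).prod := by
    intro l
    induction l with
    | nil => simp
    | cons a l ih =>
      rw [List.map_cons, List.prod_cons, ih, smul_pow, smul_mul_smul_comm, ← pow_add]
      simp only [List.map_cons, List.prod_cons, List.sum_cons]
  rw [ApowCLM_eq, ApowCLM_eq, h, ← List.ofFn_eq_map, List.sum_ofFn]

end powers

theorem monotone_add {d : ℕ} {X : Set (Idx d)} (hX : MonotoneSet d X) (n k : Idx d)
    (hn : n ∉ X) : n + k ∉ X := by
  have h1 : ∀ (j : Fin d) (t : ℕ) (n : Idx d), n ∉ X → n + t • e d j ∉ X := by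
    intro j t
    induction t with
    | zero => intro n hn; simpa using hn
    | succ t ih =>
      intro n hn
      rw [succ_nsmul, ← add_assoc]
      exact hX _ (ih n hn) j
  have h2 : ∀ s : Finset (Fin d), n + ∑ j ∈ s, k j • e d j ∉ X := by
    intro s
    induction s using Finset.induction_on with
    | empty => simpa using hn
    | insert a s ha ih =>
      rw [Finset.sum_insert ha, add_comm (k a • e d a), ← add_assoc]
      exact h1 a _ _ ih
  have := h2 Finset.univ
  rwa [sum_smul_e] at this

theorem opPow_BX {d : ℕ} {X : Set (Idx d)} (hX : MonotoneSet d X) (g : Idx d → ℂ)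
    (hg : ∀ n ∉ X, g n = 0) (k : Idx d) (n : Idx d) :
    opPow d (BXop d X) k g n = g (n + k) := by
  have hit : ∀ (j : Fin d) (t : ℕ) (g : Idx d → ℂ), (∀ n ∉ X, g n = 0) →
      (BXop d X j)^[t] g = fun n => g (n + t • e d j) := by
    intro j t
    induction t with
    | zero => intro g _; simp
    | succ t ih =>
      intro g hg
      have hB : BXop d X j g = fun n => g (n + e d j) := by
        ext n
        by_cases hn : n ∈ X
        · simp [BXop, hn]
        · simp [BXop, hn, hg _ (hX n hn j)]
      rw [Function.iterate_succ_apply, hB, ih _ fun n hn => hg _ (hX n hn j)]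
      ext n
      rw [succ_nsmul, add_assoc]
  have hl : ∀ l : List (Fin d),
      (l.map fun j => (BXop d X j)^[k j]).foldr (· ∘ ·) id g
        = fun n => g (n + (l.map fun j => k j • e d j).sum) := by
    intro l
    induction l with
    | nil => simp
    | cons a l ih =>
      simp only [List.map_cons, List.foldr_cons, List.sum_cons, Function.comp_apply]
      rw [ih, hit _ _ _ fun n hn => hg _ (monotone_add hX _ _ hn)]
      ext n
      simp only [add_assoc]
  rw [opPow, List.ofFn_eq_map, hl, ← List.ofFn_eq_map, List.sum_ofFn, sum_smul_e]

theorem polyOp_BX {d : ℕ} {X : Set (Idx d)} (hX : MonotoneSet d X) (g : Idx d → ℂ)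
    (hg : ∀ n ∉ X, g n = 0) (Q : MvPolynomial (Fin d) ℂ) (n : Idx d) :
    polyOp d Q (BXop d X) g n = ∑ k ∈ Q.support, Q.coeff k * g (n + ⇑k) := by
  simp only [polyOp, opPow_BX hX g hg]

theorem l2Norm_nonneg (d : ℕ) (g : Idx d → ℂ) : 0 ≤ l2Norm d g := Real.sqrt_nonneg _

theorem l2Norm_sq (d : ℕ) (g : Idx d → ℂ) : l2Norm d g ^ 2 = ∑' n, ‖g n‖ ^ 2 * beta d n := by
  refine Real.sq_sqrt (tsum_nonneg fun n => ?_)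
  have := beta_pos d n
  positivity

theorem l2_shift {d : ℕ} (u : Idx d → ℝ) (hu0 : ∀ n, 0 ≤ u n)
    (hu : Summable fun n => u n * beta d n) (k : Idx d) :
    Summable (fun n => u (n + k) * beta d n) ∧
      ∑' n, u (n + k) * beta d n ≤ ∑' n, u n * beta d n := by
  have hle : ∀ n : Idx d, u (n + k) * beta d n ≤ u (n + k) * beta d (n + k) :=
    fun n => mul_le_mul_of_nonneg_left (beta_le_add d n k) (hu0 _)
  have hinj : Function.Injective (fun n : Idx d => n + k) := add_left_injective _
  have hsum2 : Summable fun n : Idx d => u (n + k) * beta d (n + k) :=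
    hu.comp_injective hinj
  have hsum : Summable fun n : Idx d => u (n + k) * beta d n :=
    Summable.of_nonneg_of_le
      (fun n => mul_nonneg (hu0 _) (beta_pos d n).le) hle hsum2
  refine ⟨hsum, (hsum.tsum_le_tsum hle hsum2).trans ?_⟩
  exact tsum_comp_le_tsum_of_inj hu
    (fun n => mul_nonneg (hu0 _) (beta_pos d n).le) hinj

theorem poly_pt (d : ℕ) (S : Finset (Fin d →₀ ℕ)) (c : (Fin d →₀ ℕ) → ℂ) (g : Idx d → ℂ)
    (n : Idx d) :
    ‖∑ k ∈ S, c k * g (n + ⇑k)‖ ^ 2 * beta d n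
      ≤ (∑ k ∈ S, ‖c k‖ ^ 2) * ∑ k ∈ S, ‖g (n + ⇑k)‖ ^ 2 * beta d n := by
  rw [← Finset.sum_mul, ← mul_assoc]
  refine mul_le_mul_of_nonneg_right ?_ (beta_pos d n).le
  refine le_trans ?_ (Finset.sum_mul_sq_le_sq_mul_sq S (fun k => ‖c k‖) fun k => ‖g (n + ⇑k)‖)
  refine pow_le_pow_left₀ (norm_nonneg _) ?_ 2
  refine (norm_sum_le _ _).trans (le_of_eq ?_)
  simp only [norm_mul]

theorem bounded_BX {d : ℕ} {X : Set (Idx d)} (hX : MonotoneSet d X)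
    (Q : MvPolynomial (Fin d) ℂ) :
    ∃ C, 0 ≤ C ∧ ∀ g, MemL2 d X g → l2Norm d (polyOp d Q (BXop d X) g) ≤ C * l2Norm d g := by
  obtain ⟨S, hSdef⟩ : ∃ S : ℝ, S = ∑ k ∈ Q.support, ‖Q.coeff k‖ ^ 2 := ⟨_, rfl⟩
  have hS : 0 ≤ S := by rw [hSdef]; exact Finset.sum_nonneg fun _ _ => by positivity
  refine ⟨Real.sqrt (S * Q.support.card), Real.sqrt_nonneg _, fun g hg => ?_⟩
  refine le_of_sq_le_sq ?_ (mul_nonneg (Real.sqrt_nonneg _) (l2Norm_nonneg _ _))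
  rw [mul_pow, Real.sq_sqrt (mul_nonneg hS (Nat.cast_nonneg _)), l2Norm_sq, l2Norm_sq]
  have hsh := l2_shift (fun n => ‖g n‖ ^ 2) (fun n => by positivity) hg.2
  have hpt : ∀ n, ‖polyOp d Q (BXop d X) g n‖ ^ 2 * beta d n
      ≤ S * ∑ k ∈ Q.support, ‖g (n + ⇑k)‖ ^ 2 * beta d n := by
    intro n
    rw [polyOp_BX hX g hg.1, hSdef]
    exact poly_pt d _ _ g n
  have hR : Summable fun n : Idx d => S * ∑ k ∈ Q.support, ‖g (n + ⇑k)‖ ^ 2 * beta d n :=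
    (summable_sum fun (k : Fin d →₀ ℕ) _ => (hsh ⇑k).1).mul_left S
  have hL : Summable fun n => ‖polyOp d Q (BXop d X) g n‖ ^ 2 * beta d n :=
    Summable.of_nonneg_of_le
      (fun n => mul_nonneg (sq_nonneg _) (beta_pos d n).le) hpt hR
  refine (hL.tsum_le_tsum hpt hR).trans ?_
  rw [tsum_mul_left, Summable.tsum_finsetSum (fun (k : Fin d →₀ ℕ) _ => (hsh ⇑k).1), mul_assoc]
  refine mul_le_mul_of_nonneg_left ?_ hS
  rw [← nsmul_eq_mul]
  exact Finset.sum_le_card_nsmul _ _ _ fun (k : Fin d →₀ ℕ) _ => (hsh ⇑k).2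

/-! ### The dilation identity -/

section main
variable {d : ℕ} {H : Type*} [NormedAddCommGroup H] [InnerProductSpace ℂ H] [CompleteSpace H]

theorem exists_defect (A : Fin d → H →L[ℂ] H)
    (hrow : ∀ h : H, ∑ j, ‖A j h‖ ^ 2 ≤ ‖h‖ ^ 2) :
    ∃ D : H →L[ℂ] H, ∀ h, ‖D h‖ ^ 2 + ∑ j, ‖A j h‖ ^ 2 = ‖h‖ ^ 2 := by
  set P : H →L[ℂ] H := 1 - ∑ j, star (A j) * A j
  have hre : ∀ h, inner ℂ (P h) h = ((‖h‖ ^ 2 - ∑ j, ‖A j h‖ ^ 2 : ℝ) : ℂ) := by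
    intro h
    have : ∀ j, inner ℂ ((star (A j) * A j) h) h = ((‖A j h‖ ^ 2 : ℝ) : ℂ) := by
      intro j
      rw [mul_apply_eq_comp, ContinuousLinearMap.star_eq_adjoint,
        ContinuousLinearMap.adjoint_inner_left, inner_self_eq_norm_sq_to_K]
      simp
    simp only [P, sub_apply, sum_apply, inner_sub_left,
      sum_inner, this, one_apply_eq_self]
    rw [inner_self_eq_norm_sq_to_K]
    push_cast
    simp
  have hP : 0 ≤ P := by
    rw [ContinuousLinearMap.nonneg_iff_isPositive, ContinuousLinearMap.isPositive_iff_complex]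
    intro h
    rw [hre]
    constructor
    · exact congrArg _ (Complex.ofReal_re _)
    · exact (sub_nonneg.mpr (hrow h)).trans_eq (Complex.ofReal_re _).symm
  obtain ⟨D, hD⟩ := CStarAlgebra.nonneg_iff_eq_star_mul_self.mp hP
  refine ⟨D, fun h => ?_⟩
  have h1 := hre h
  rw [hD, mul_apply_eq_comp, ContinuousLinearMap.star_eq_adjoint,
        ContinuousLinearMap.adjoint_inner_left, inner_self_eq_norm_sq_to_K] at h1
  have h2 : ‖D h‖ ^ 2 = ‖h‖ ^ 2 - ∑ j, ‖A j h‖ ^ 2 := by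
    apply Complex.ofReal_injective
    rw [← h1]
    push_cast
    rfl
  linarith

theorem dilation (A : Fin d → H →L[ℂ] H) (hc : ∀ i j, Commute (A i) (A j))
    (s : ℝ) (hs0 : 0 ≤ s) (hs : s < 1)
    (hrow : ∀ h : H, ∑ j, ‖A j h‖ ^ 2 ≤ s * ‖h‖ ^ 2) (D : H →L[ℂ] H)
    (hD : ∀ h, ‖D h‖ ^ 2 + ∑ j, ‖A j h‖ ^ 2 = ‖h‖ ^ 2) (h : H) :
    ∑' n, wt d n * ENNReal.ofReal (‖D (ApowCLM d A n h)‖ ^ 2) = ENNReal.ofReal (‖h‖ ^ 2) := by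
  let f : Idx d → ENNReal := fun n => ENNReal.ofReal (‖ApowCLM d A n h‖ ^ 2)
  have hf : ∀ n, ∑ j, f (n + e d j)
      = ENNReal.ofReal (∑ j, ‖A j (ApowCLM d A n h)‖ ^ 2) := by
    intro n
    rw [ENNReal.ofReal_sum_of_nonneg (fun _ _ => by positivity)]
    refine Finset.sum_congr rfl fun j _ => ?_
    simp only [f]
    rw [add_comm n, ApowCLM_add A hc, ApowCLM_e, mul_apply_eq_comp]
  have hfin : ∑' n, wt d n * f n ≠ ⊤ := by
    apply tsum_lt_top d f (ENNReal.ofReal s)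
    · simpa using hs
    · intro n; exact ENNReal.ofReal_ne_top
    · intro n
      rw [hf, ← ENNReal.ofReal_mul hs0]
      exact ENNReal.ofReal_le_ofReal (hrow _)
  have h1 := tsum_shift d f
  have h2 : ∑' n, wt d n * f n = ∑' n, wt d n * ENNReal.ofReal (‖D (ApowCLM d A n h)‖ ^ 2)
      + ∑' n, wt d n * ∑ j, f (n + e d j) := by
    rw [← ENNReal.tsum_add]
    refine tsum_congr fun n => ?_
    rw [← mul_add, hf, ← ENNReal.ofReal_add (by positivity)
      (Finset.sum_nonneg fun _ _ => by positivity), hD]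
  have h3 : ∑' n, wt d n * ∑ j, f (n + e d j) ≠ ⊤ :=
    ne_top_of_le_ne_top hfin (by rw [h1]; exact le_add_self)
  have h4 : f 0 = ENNReal.ofReal (‖h‖ ^ 2) := by simp [f, ApowCLM_zero]
  rw [h1, h4] at h2
  exact ((ENNReal.add_left_inj h3).mp h2).symm

theorem strict_case (X : Set (Idx d)) (hX : MonotoneSet d X)
    (A : Fin d → H →L[ℂ] H) (hc : ∀ i j, Commute (A i) (A j))
    (s : ℝ) (hs0 : 0 ≤ s) (hs : s < 1)
    (hrow : ∀ h : H, ∑ j, ‖A j h‖ ^ 2 ≤ s * ‖h‖ ^ 2)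
    (hA0 : ∀ n ∉ X, ApowCLM d A n = 0)
    (Q : MvPolynomial (Fin d) ℂ) (C : ℝ) (hC : 0 ≤ C)
    (hCb : ∀ g, MemL2 d X g → l2Norm d (polyOp d Q (BXop d X) g) ≤ C * l2Norm d g) (h : H) :
    ‖QevalCLM d A Q h‖ ≤ C * ‖h‖ := by
  obtain ⟨D, hD⟩ := exists_defect A fun h => (hrow h).trans
    (mul_le_of_le_one_left (by positivity) hs.le)
  have dil := dilation A hc s hs0 hs hrow D hD
  obtain ⟨w, b, -⟩ := exists_hilbertBasis ℂ H
  -- scalar coefficient functions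
  let g : H → w → Idx d → ℂ := fun x i n => inner ℂ (b i) (D (ApowCLM d A n x))
  have hpars : ∀ x : H, ∑' i, ENNReal.ofReal (‖inner ℂ (b i) x‖ ^ 2)
      = ENNReal.ofReal (‖x‖ ^ 2) := by
    intro x
    have hs := b.hasSum_inner_mul_inner x x
    have hs' : HasSum (fun i => ‖inner ℂ (b i) x‖ ^ 2) (‖x‖ ^ 2) := by
      have := Complex.hasSum_re hs
      rw [inner_self_eq_norm_sq_to_K] at this
      convert this using 1
      · ext i
        rw [← inner_conj_symm x (b i), ← Complex.normSq_eq_conj_mul_self, Complex.ofReal_re,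
          Complex.normSq_eq_norm_sq]
      · norm_cast
    rw [← hs'.tsum_eq, ENNReal.ofReal_tsum_of_nonneg (fun _ => by positivity) hs'.summable]
  have htot : ∀ x, ∑' i, ∑' n, ENNReal.ofReal (‖g x i n‖ ^ 2 * beta d n)
      = ENNReal.ofReal (‖x‖ ^ 2) := by
    intro x
    rw [ENNReal.tsum_comm, ← dil x]
    refine tsum_congr fun n => ?_
    rw [← hpars (D _), ← ENNReal.tsum_mul_left]
    refine tsum_congr fun i => ?_
    rw [wt, ← ENNReal.ofReal_mul (beta_pos d n).le, mul_comm]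
  have hnn : ∀ x i n, 0 ≤ ‖g x i n‖ ^ 2 * beta d n := fun x i n =>
    mul_nonneg (by positivity) (beta_pos d n).le
  have hmem : ∀ x i, MemL2 d X (g x i) := by
    intro x i
    refine ⟨fun n hn => by simp [g, hA0 n hn], ?_⟩
    have : ∑' n, ENNReal.ofReal (‖g x i n‖ ^ 2 * beta d n) ≠ ⊤ := by
      refine ne_top_of_le_ne_top ?_
        (ENNReal.le_tsum (f := fun i => ∑' n, ENNReal.ofReal (‖g x i n‖ ^ 2 * beta d n)) i)
      rw [htot]
      exact ENNReal.ofReal_ne_top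
    have h1 := ENNReal.summable_toReal this
    refine h1.congr fun n => ?_
    exact (ENNReal.toReal_ofReal (hnn x i n))
  have hnorm : ∀ x i, ∑' n, ENNReal.ofReal (‖g x i n‖ ^ 2 * beta d n)
      = ENNReal.ofReal (l2Norm d (g x i) ^ 2) := by
    intro x i
    rw [l2Norm_sq, ENNReal.ofReal_tsum_of_nonneg (hnn x i) (hmem x i).2]
  have hT : ∀ i, polyOp d Q (BXop d X) (g h i) = g (QevalCLM d A Q h) i := by
    intro i
    ext n
    rw [polyOp_BX hX _ (hmem h i).1]
    simp only [g, QevalCLM, sum_apply, map_sum, inner_sum,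
      smul_apply, map_smul, inner_smul_right, ApowCLM_add A hc,
      mul_apply_eq_comp]
  have hfinal : ENNReal.ofReal (‖QevalCLM d A Q h‖ ^ 2) ≤ ENNReal.ofReal ((C * ‖h‖) ^ 2) := by
    rw [← htot, mul_pow, ENNReal.ofReal_mul (by positivity), ← htot h, ← ENNReal.tsum_mul_left]
    refine ENNReal.tsum_le_tsum fun i => ?_
    rw [hnorm, hnorm, ← ENNReal.ofReal_mul (by positivity), ← mul_pow, ← hT]
    refine ENNReal.ofReal_le_ofReal ?_
    exact pow_le_pow_left₀ (l2Norm_nonneg _ _) (hCb _ (hmem h i)) 2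
  have h5 := (ENNReal.ofReal_le_ofReal_iff (by positivity)).mp hfinal
  exact le_of_sq_le_sq h5 (by positivity)

end main

/-- Let `X ⊆ ℕ^d` be monotone, `d ≥ 2`, and `A` a commuting row
contraction on a complex Hilbert space `H` with `A^n = 0` for every `n ∉ X`.  Then for
every complex polynomial `Q` of `d` variables, `‖Q(A)‖ ≤ ‖Q(B^X)‖`. -/
theorem drury_inequality_vanishing (d : ℕ) (hd : 2 ≤ d) {H : Type*} [NormedAddCommGroup H]
    [InnerProductSpace ℂ H] [CompleteSpace H] (X : Set (Idx d)) (hX : MonotoneSet d X)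
    (A : Fin d → H →L[ℂ] H)
    (hcomm : ∀ i j, A i ∘L A j = A j ∘L A i)
    (hrow : ∀ h : H, ∑ j, ‖A j h‖ ^ 2 ≤ ‖h‖ ^ 2)
    (hA0 : ∀ n ∉ X, ApowCLM d A n = 0)
    (Q : MvPolynomial (Fin d) ℂ) :
    ‖QevalCLM d A Q‖ ≤ opNormL2 d X (polyOp d Q (BXop d X)) := by
  have hc : ∀ i j, Commute (A i) (A j) := fun i j => hcomm i j
  obtain ⟨C₀, hC₀⟩ := bounded_BX hX Q
  refine le_csInf ⟨C₀, hC₀⟩ ?_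
  rintro C ⟨hC, hCb⟩
  refine ContinuousLinearMap.opNorm_le_bound _ hC fun h => ?_
  have hr : ∀ r : ℝ, 0 ≤ r → r < 1 →
      ‖QevalCLM d (fun j => (r : ℂ) • A j) Q h‖ ≤ C * ‖h‖ := by
    intro r hr0 hr1
    refine strict_case X hX (fun j => (r : ℂ) • A j) ?_ (r ^ 2) (by positivity)
      (by nlinarith) ?_ ?_ Q C hC hCb h
    · intro i j
      exact ((hc i j).smul_left _).smul_right _
    · intro x
      have : ∀ j, ‖((r : ℂ) • A j) x‖ ^ 2 = r ^ 2 * ‖A j x‖ ^ 2 := by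
        intro j
        rw [smul_apply, norm_smul, mul_pow]
        simp
      simp only [this, ← Finset.mul_sum]
      exact mul_le_mul_of_nonneg_left (hrow x) (by positivity)
    · intro n hn
      rw [ApowCLM_smul, hA0 n hn, smul_zero]
  have hcont : Continuous fun r : ℝ => ‖QevalCLM d (fun j => (r : ℂ) • A j) Q h‖ := by
    simp only [QevalCLM, ApowCLM_smul, sum_apply,
      smul_apply]
    fun_prop
  have h1 : QevalCLM d A Q = QevalCLM d (fun j => ((1 : ℝ) : ℂ) • A j) Q := by simp
  rw [h1]
  have ht : Filter.Tendsto (fun r : ℝ => ‖QevalCLM d (fun j => (r : ℂ) • A j) Q h‖)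
      (nhdsWithin 1 (Set.Iio 1)) (nhds ‖QevalCLM d (fun j => ((1 : ℝ) : ℂ) • A j) Q h‖) :=
    hcont.continuousAt.tendsto.mono_left nhdsWithin_le_nhds
  refine le_of_tendsto ht ?_
  filter_upwards [Ioo_mem_nhdsLT (show (0 : ℝ) < 1 by norm_num)] with r hr'
  exact hr r hr'.1.le hr'.2

end DruryArveson
end
end

section
/- Let X ⊆ ℕ^d be a nonempty monotone set. Then for every n ∈ ℕ^d, the operator (B^X)^n on ℓ²(X,β) is zero if and only if n ∈ ℕ^d∖X. In particular {n ∈ ℕ^d : (B^X)^n = 0} = ℕ^d∖X. -/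
open scoped BigOperators ComplexConjugate

noncomputable section

namespace DruryArveson

theorem notMem_smul (d : ℕ) (X : Set (Idx d)) (hX : MonotoneSet d X) (j : Fin d) (k : ℕ)
    (n : Idx d) (hn : n ∉ X) : n + k • e d j ∉ X := by
  induction k with
  | zero => simpa using hn
  | succ k ih =>
    have := hX _ ih j
    rwa [succ_nsmul, ← add_assoc]

theorem notMem_list (d : ℕ) (X : Set (Idx d)) (hX : MonotoneSet d X) (k : Idx d)
    (l : List (Fin d)) (n : Idx d) (hn : n ∉ X) :
    n + (l.map fun j => k j • e d j).sum ∉ X := by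
  induction l generalizing n with
  | nil => simpa using hn
  | cons j l ih =>
    rw [List.map_cons, List.sum_cons, ← add_assoc]
    exact ih _ (notMem_smul d X hX j _ n hn)

theorem sum_list (d : ℕ) (k : Idx d) :
    ((List.finRange d).map fun j => k j • e d j).sum = k := by
  rw [← List.ofFn_eq_map, List.sum_ofFn]
  funext i
  simp [e, Finset.sum_apply]

theorem iter_eq (d : ℕ) (X : Set (Idx d)) (hX : MonotoneSet d X) (j : Fin d) (k : ℕ)
    (g : Idx d → ℂ) (hg : ∀ n ∉ X, g n = 0) :
    (BXop d X j)^[k] g = fun m => g (m + k • e d j) := by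
  induction k with
  | zero => simp
  | succ k ih =>
    rw [Function.iterate_succ_apply', ih]
    funext m
    have h : m + e d j + k • e d j = m + (k + 1) • e d j := by
      rw [succ_nsmul']; exact add_assoc _ _ _
    by_cases hm : m ∈ X
    · simp only [BXop, Set.indicator_of_mem hm, h]
    · simp only [BXop, Set.indicator_of_notMem hm]
      exact (hg _ (notMem_smul d X hX j _ m hm)).symm

theorem list_eq (d : ℕ) (X : Set (Idx d)) (hX : MonotoneSet d X) (k : Idx d)
    (l : List (Fin d)) (g : Idx d → ℂ) (hg : ∀ n ∉ X, g n = 0) :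
    ((l.map fun j => (BXop d X j)^[k j]).foldr (· ∘ ·) id) g =
      fun m => g (m + (l.map fun j => k j • e d j).sum) := by
  induction l with
  | nil => simp
  | cons j l ih =>
    rw [List.map_cons, List.foldr_cons, Function.comp_apply, ih,
      iter_eq d X hX j (k j) _ (fun n hn => hg _ (notMem_list d X hX k l n hn))]
    funext m
    rw [List.map_cons, List.sum_cons, ← add_assoc]

theorem opPow_eq (d : ℕ) (X : Set (Idx d)) (hX : MonotoneSet d X) (k : Idx d)
    (g : Idx d → ℂ) (hg : ∀ n ∉ X, g n = 0) :
    opPow d (BXop d X) k g = fun m => g (m + k) := by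
  have := list_eq d X hX k (List.finRange d) g hg
  rw [sum_list] at this
  rw [opPow, List.ofFn_eq_map]
  exact this

/-- For a nonempty monotone set `X ⊆ ℕ^d` and any `n ∈ ℕ^d`, the
operator `(B^X)^n` on `ℓ²(X,β)` is zero if and only if `n ∉ X`; in particular
`{n : (B^X)^n = 0} = ℕ^d ∖ X`. -/
theorem backshift_power_zero_iff (d : ℕ) (X : Set (Idx d)) (hX : MonotoneSet d X)
    (hne : X.Nonempty) :
    ∀ n : Idx d, (∀ g, MemL2 d X g → opPow d (BXop d X) n g = 0) ↔ n ∉ X := by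
  intro n
  constructor
  · intro h hn
    have hs : ∀ m ∉ X, (Pi.single n 1 : Idx d → ℂ) m = 0 := by
      intro m hm
      apply Pi.single_eq_of_ne
      rintro rfl
      exact hm hn
    have h0 := h (Pi.single n 1) ⟨hs, by
      apply summable_of_ne_finset_zero (s := {n})
      intro m hm
      have : m ≠ n := by simpa using hm
      simp [Pi.single_eq_of_ne this]⟩
    rw [opPow_eq d X hX n _ hs] at h0
    have := congrFun h0 0
    simp at this
  · intro hn g hg
    rw [opPow_eq d X hX n g hg.1]
    funext m
    apply hg.1
    have := notMem_list d X hX m (List.finRange d) n hn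
    rwa [sum_list, add_comm] at this

end DruryArveson
end
end

section
/- Let X ⊆ ℕ^d be an arbitrary subset. The compressed backshift operators B^X_1,…,B^X_d on ℓ²(X,β) commute pairwise (B^X_i B^X_j = B^X_j B^X_i for all i,j) if and only if X satisfies the shape condition: for all i,j ∈ {1,…,d} and all n ∈ ℕ^d, if n ∈ X, n+e_i ∈ X and n+e_i+e_j ∈ X, then n+e_j ∈ X. -/
open scoped BigOperators ComplexConjugate

noncomputable section

namespace DruryArveson

/-- For an arbitrary `X ⊆ ℕ^d`, the compressed backshifts
`B^X_1,…,B^X_d` commute pairwise on `ℓ²(X,β)` if and only if `X` satisfies the shape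
condition: `n ∈ X`, `n+e_i ∈ X`, `n+e_i+e_j ∈ X` imply `n+e_j ∈ X`. -/
theorem backshift_commute_iff_shape (d : ℕ) (X : Set (Idx d)) :
    (∀ i j : Fin d, ∀ g, MemL2 d X g →
        BXop d X i (BXop d X j g) = BXop d X j (BXop d X i g)) ↔
    (∀ i j : Fin d, ∀ n : Idx d,
        n ∈ X → n + e d i ∈ X → n + e d i + e d j ∈ X → n + e d j ∈ X) := by
  classical
  constructor
  · intro h i j n hn hi hij
    by_contra hj
    have hg : MemL2 d X (Pi.single (n + e d i + e d j) 1) := by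
      refine ⟨fun m hm => ?_, ?_⟩
      · have hne : m ≠ n + e d i + e d j := fun hh => hm (hh ▸ hij)
        exact Pi.single_eq_of_ne hne _
      · refine summable_of_ne_finset_zero (s := {n + e d i + e d j}) fun m hm => ?_
        have hne : m ≠ n + e d i + e d j := by simpa using hm
        rw [Pi.single_eq_of_ne hne]
        simp
    have h1 := congrFun (h i j _ hg) n
    simp only [BXop] at h1
    rw [Set.indicator_of_mem hn, Set.indicator_of_mem hn, Set.indicator_of_mem hi,
      Set.indicator_of_notMem hj, Pi.single_eq_same] at h1
    exact one_ne_zero h1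
  · intro h i j g hg
    funext n
    simp only [BXop]
    by_cases hn : n ∈ X
    · rw [Set.indicator_of_mem hn, Set.indicator_of_mem hn]
      have hc : n + e d j + e d i = n + e d i + e d j := add_right_comm _ _ _
      by_cases hx : n + e d i + e d j ∈ X
      · have hiff : n + e d i ∈ X ↔ n + e d j ∈ X :=
          ⟨fun hi => h i j n hn hi hx, fun hj => h j i n hn hj (hc ▸ hx)⟩
        by_cases hi : n + e d i ∈ X
        · rw [Set.indicator_of_mem hi, Set.indicator_of_mem (hiff.1 hi), hc]
        · rw [Set.indicator_of_notMem hi, Set.indicator_of_notMem (fun hj => hi (hiff.2 hj))]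
      · have h0 := hg.1 _ hx
        simp [Set.indicator_apply, hc, h0]
    · rw [Set.indicator_of_notMem hn, Set.indicator_of_notMem hn]

end DruryArveson
end
end

section
/- Let N_1 ∈ ℕ and let X = S_1 = {n ∈ ℕ^d : n_1 ≤ N_1} be the slab in the first coordinate. Then for all z, w ∈ 𝔹^d, the reproducing kernel of H_d(X) is given in closed form by k^X(w,z) = ∑_{n∈X} β(n) (conj z)^n w^n = (1/(1 − ⟨w,z⟩)) · (1 − ( (conj z_1) w_1 / (1 − ⟨w,z⟩ + (conj z_1) w_1) )^{N_1+1}), where ⟨w,z⟩ = ∑_{j=1}^d (conj z_j) w_j; in particular the series on the left converges absolutely to the right-hand side. -/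
open scoped BigOperators ComplexConjugate

noncomputable section

namespace DruryArveson

/-- the multinomial theorem on a fiber of the total degree. -/
lemma hasSum_fiber {R : Type*} [NormedField R] (m L : ℕ) (y : Fin m → R) :
    HasSum (fun n : {n : Fin m → ℕ // ∑ j, n j = L} =>
      (Nat.multinomial Finset.univ n.1 : R) * ∏ j, y j ^ n.1 j) ((∑ j, y j) ^ L) := by
  rw [Finset.sum_pow_eq_sum_piAntidiag]
  have h := Finset.hasSum (Finset.piAntidiag (Finset.univ : Finset (Fin m)) L)
    (fun n : Fin m → ℕ => (Nat.multinomial Finset.univ n : R) * ∏ j, y j ^ n j)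
  have h2 := (Equiv.hasSum_iff (Equiv.subtypeEquivRight
    (p := fun n : Fin m → ℕ => ∑ j, n j = L)
    (q := fun n => n ∈ Finset.piAntidiag (Finset.univ : Finset (Fin m)) L)
    (by intro n; simp))).2 h
  exact h2

/-- summing a function of the total degree against the multinomial weights. -/
lemma hasSum_degree (m : ℕ) (y : Fin m → ℂ) (c : ℕ → ℂ) (a : ℂ)
    (hc : Summable fun L => ‖c L‖ * (∑ j, ‖y j‖) ^ L)
    (ha : HasSum (fun L => c L * (∑ j, y j) ^ L) a) :
    (Summable fun n : Fin m → ℕ =>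
      ‖c (∑ j, n j) * ((Nat.multinomial Finset.univ n : ℂ) * ∏ j, y j ^ n j)‖) ∧
    HasSum (fun n : Fin m → ℕ =>
      c (∑ j, n j) * ((Nat.multinomial Finset.univ n : ℂ) * ∏ j, y j ^ n j)) a := by
  have hf : ∀ L, HasSum (fun n : {n : Fin m → ℕ // ∑ j, n j = L} =>
      ‖c (∑ j, n.1 j) * ((Nat.multinomial Finset.univ n.1 : ℂ) * ∏ j, y j ^ n.1 j)‖)
      (‖c L‖ * (∑ j, ‖y j‖) ^ L) := by
    intro L
    have h := (hasSum_fiber m L (fun j => ‖y j‖)).mul_left ‖c L‖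
    refine h.congr_fun ?_
    rintro ⟨n, hn⟩
    simp [hn]
  have hs : Summable fun n : Fin m → ℕ =>
      ‖c (∑ j, n j) * ((Nat.multinomial Finset.univ n : ℂ) * ∏ j, y j ^ n j)‖ := by
    rw [← (Equiv.sigmaFiberEquiv (fun n : Fin m → ℕ => ∑ j, n j)).summable_iff]
    refine (summable_sigma_of_nonneg (fun _ => norm_nonneg _)).2 ⟨fun L => (hf L).summable, ?_⟩
    refine hc.congr fun L => ?_
    exact (hf L).tsum_eq.symm
  refine ⟨hs, ?_⟩
  rw [← (Equiv.sigmaFiberEquiv (fun n : Fin m → ℕ => ∑ j, n j)).hasSum_iff]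
  refine HasSum.sigma_of_hasSum ha (fun L => ?_)
    ((Equiv.sigmaFiberEquiv (fun n : Fin m → ℕ => ∑ j, n j)).summable_iff.2 hs.of_norm)
  have h := (hasSum_fiber m L y).mul_left (c L)
  refine h.congr_fun ?_
  rintro ⟨n, hn⟩
  simp [Equiv.sigmaFiberEquiv, hn]

lemma beta_eq (d : ℕ) (n : Idx d) : beta d n = (Nat.multinomial Finset.univ n : ℝ) := by
  unfold beta
  have h : (∏ j, ((n j).factorial : ℝ)) ≠ 0 :=
    Finset.prod_ne_zero_iff.2 fun j _ => by positivity
  rw [div_eq_iff h, ← Nat.multinomial_spec]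
  push_cast
  ring

lemma multinomial_fin_cons (m k : ℕ) (n : Fin m → ℕ) :
    Nat.multinomial Finset.univ (Fin.cons k n : Fin (m + 1) → ℕ) =
      (∑ j, n j + k).choose k * Nat.multinomial Finset.univ n := by
  have h1 := Nat.multinomial_spec Finset.univ (Fin.cons k n : Fin (m + 1) → ℕ)
  have h2 := Nat.multinomial_spec Finset.univ n
  rw [Fin.prod_univ_succ, Fin.sum_univ_succ] at h1
  simp only [Fin.cons_zero, Fin.cons_succ] at h1
  have h3 := Nat.add_choose_mul_factorial_mul_factorial k (∑ j, n j)
  rw [add_comm k] at h3 h1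
  rw [← h3, ← h2, Nat.choose_symm_add] at h1
  have hp : 0 < k.factorial * ∏ j, (n j).factorial :=
    Nat.mul_pos (Nat.factorial_pos _) (Finset.prod_pos fun j _ => Nat.factorial_pos _)
  apply Nat.eq_of_mul_eq_mul_left hp
  rw [h1]
  ring

lemma term_eq (d : ℕ) (z w : Fin d → ℂ) (n : Idx d) :
    (beta d n : ℂ) * mpow d (fun j => conj (z j)) n * mpow d w n =
      (Nat.multinomial Finset.univ n : ℂ) * ∏ j, (conj (z j) * w j) ^ n j := by
  rw [beta_eq, mpow, mpow, mul_assoc, ← Finset.prod_mul_distrib]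
  simp [mul_pow]

lemma slab_aux (m N : ℕ) (x : Fin (m + 1) → ℂ) (hx : ∑ j, ‖x j‖ < 1) :
    (Summable fun n : {n : Fin (m + 1) → ℕ // n 0 ≤ N} =>
      ‖(Nat.multinomial Finset.univ n.1 : ℂ) * ∏ j, x j ^ n.1 j‖) ∧
    HasSum (fun n : {n : Fin (m + 1) → ℕ // n 0 ≤ N} =>
      (Nat.multinomial Finset.univ n.1 : ℂ) * ∏ j, x j ^ n.1 j)
      ((1 / (1 - ∑ j, x j)) * (1 - (x 0 / (1 - ∑ j, x j + x 0)) ^ (N + 1))) := by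
  have hr0 : 0 ≤ ∑ j, ‖x j‖ := Finset.sum_nonneg fun j _ => norm_nonneg _
  have ht : ‖∑ j, x j‖ < 1 := (norm_sum_le _ _).trans_lt hx
  have hall : Summable fun n : Fin (m + 1) → ℕ =>
      ‖(Nat.multinomial Finset.univ n : ℂ) * ∏ j, x j ^ n j‖ := by
    have h := (hasSum_degree (m + 1) x (fun _ => 1) _
      (by simpa using summable_geometric_of_lt_one hr0 hx)
      (by simpa using hasSum_geometric_of_norm_lt_one ht)).1
    simpa using h
  refine ⟨hall.subtype _, ?_⟩
  set s : ℂ := ∑ j : Fin m, x j.succ with hs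
  have hst : ∑ j, x j = x 0 + s := Fin.sum_univ_succ x
  have hr : ∑ j : Fin m, ‖x j.succ‖ < 1 := by
    rw [Fin.sum_univ_succ] at hx
    linarith [norm_nonneg (x 0)]
  have hr' : 0 ≤ ∑ j : Fin m, ‖x j.succ‖ := Finset.sum_nonneg fun j _ => norm_nonneg _
  have hsn : ‖s‖ < 1 := (norm_sum_le _ _).trans_lt hr
  have h1s : 1 - s ≠ 0 := by
    intro h
    rw [← sub_eq_zero.1 h] at hsn
    simp at hsn
  have h1t : 1 - (x 0 + s) ≠ 0 := by
    intro h
    rw [hst, ← sub_eq_zero.1 h] at ht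
    simp at ht
  have hk : ∀ k : ℕ, HasSum (fun n : Fin m → ℕ =>
      (Nat.multinomial Finset.univ (Fin.cons k n : Fin (m + 1) → ℕ) : ℂ) *
        ∏ j, x j ^ (Fin.cons k n : Fin (m + 1) → ℕ) j)
      (x 0 ^ k * (1 / (1 - s) ^ (k + 1))) := by
    intro k
    have h := (hasSum_degree m (fun j => x j.succ)
      (fun L => x 0 ^ k * ((L + k).choose k : ℂ)) (x 0 ^ k * (1 / (1 - s) ^ (k + 1))) ?_ ?_).2
    · convert h using 2 with n
      rw [multinomial_fin_cons, Fin.prod_univ_succ]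
      simp only [Fin.cons_zero, Fin.cons_succ]
      push_cast
      ring
    · have h := (summable_choose_mul_geometric_of_norm_lt_one k
        (r := ∑ j : Fin m, ‖x j.succ‖) (by rwa [Real.norm_of_nonneg hr'])).mul_left (‖x 0‖ ^ k)
      refine h.congr fun L => ?_
      simp [mul_assoc]
    · have h := (hasSum_choose_mul_geometric_of_norm_lt_one k hsn).mul_left (x 0 ^ k)
      simpa [mul_assoc] using h
  let F : (Fin (m + 1) → ℕ) → ℂ := fun n =>
    (Nat.multinomial Finset.univ n : ℂ) * ∏ j, x j ^ n j
  have hF : Summable F := hall.of_norm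
  let S : Set (Fin (m + 1) → ℕ) := {n | n 0 ≤ N}
  change HasSum (F ∘ ((↑) : S → (Fin (m + 1) → ℕ))) _
  rw [hasSum_subtype_iff_indicator]
  have hI := (hF.indicator S).hasSum
  have hI2 := (Fin.consEquiv (fun _ : Fin (m + 1) => ℕ)).hasSum_iff.2 hI
  have hg := HasSum.prod_fiberwise hI2
    (g := fun k => if k ≤ N then x 0 ^ k * (1 / (1 - s) ^ (k + 1)) else 0) (by
      intro k
      by_cases hkN : k ≤ N
      · rw [if_pos hkN]
        refine (hk k).congr_fun ?_
        intro n
        simp [Fin.consEquiv, S, F, hkN]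
      · rw [if_neg hkN]
        convert (hasSum_zero : HasSum (fun _ : Fin m → ℕ => (0 : ℂ)) 0) using 2 with n
        simp [Fin.consEquiv, S, hkN])
  have hfin := hasSum_sum_of_ne_finset_zero (L := SummationFilter.unconditional ℕ) (s := Finset.range (N + 1))
    (f := fun k => if k ≤ N then x 0 ^ k * (1 / (1 - s) ^ (k + 1)) else 0) (by
      intro k hk
      rw [Finset.mem_range] at hk
      exact if_neg (by omega))
  have hval := hg.unique hfin
  have hgeo : ∑ k ∈ Finset.range (N + 1),
      (if k ≤ N then x 0 ^ k * (1 / (1 - s) ^ (k + 1)) else 0) =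
      (1 / (1 - ∑ j, x j)) * (1 - (x 0 / (1 - ∑ j, x j + x 0)) ^ (N + 1)) := by
    have h1 : ∑ k ∈ Finset.range (N + 1),
        (if k ≤ N then x 0 ^ k * (1 / (1 - s) ^ (k + 1)) else 0) =
        (1 / (1 - s)) * ∑ k ∈ Finset.range (N + 1), (x 0 / (1 - s)) ^ k := by
      rw [Finset.mul_sum]
      refine Finset.sum_congr rfl fun k hk => ?_
      rw [Finset.mem_range] at hk
      rw [if_pos (by omega), div_pow, pow_succ]
      field_simp
    rw [h1, hst]
    have h2 := mul_neg_geom_sum (x 0 / (1 - s)) (N + 1)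
    have h3 : 1 - (x 0 + s) + x 0 = 1 - s := by ring
    rw [h3, ← h2]
    have h4 : 1 - x 0 / (1 - s) = (1 - (x 0 + s)) / (1 - s) := by
      field_simp
      ring
    rw [h4]
    field_simp
  rw [← hgeo, ← hval]
  exact hI

/-- **kernel of a slab.** Let `X = S_1 = {n ∈ ℕ^d : n_1 ≤ N_1}`.  For
`z, w` in the unit ball `𝔹^d`, the reproducing kernel of `H_d(X)`,
`k^X(w,z) = ∑_{n ∈ X} β(n) (conj z)^n w^n`, converges absolutely and equals
`(1/(1-⟨w,z⟩)) (1 - (conj(z_1) w_1 / (1-⟨w,z⟩+conj(z_1) w_1))^{N_1+1})`, where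
`⟨w,z⟩ = ∑_j conj(z_j) w_j`. -/
theorem slab_kernel (d : ℕ) (hd : 0 < d) (N1 : ℕ) (z w : Fin d → ℂ)
    (hz : ∑ j, ‖z j‖ ^ 2 < 1) (hw : ∑ j, ‖w j‖ ^ 2 < 1) :
    (Summable fun n : {n : Idx d // n ⟨0, hd⟩ ≤ N1} =>
      ‖(beta d n : ℂ) * mpow d (fun j => conj (z j)) n * mpow d w n‖) ∧
    HasSum (fun n : {n : Idx d // n ⟨0, hd⟩ ≤ N1} =>
        (beta d n : ℂ) * mpow d (fun j => conj (z j)) n * mpow d w n)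
      ((1 / (1 - ∑ j, conj (z j) * w j)) *
        (1 - (conj (z ⟨0, hd⟩) * w ⟨0, hd⟩ /
            (1 - ∑ j, conj (z j) * w j + conj (z ⟨0, hd⟩) * w ⟨0, hd⟩)) ^ (N1 + 1))) := by
  obtain ⟨m, rfl⟩ : ∃ m, d = m + 1 := ⟨d - 1, by omega⟩
  simp only [term_eq]
  refine slab_aux m N1 (fun j => conj (z j) * w j) ?_
  have h : ∑ j, ‖conj (z j) * w j‖ ≤ ∑ j, (‖z j‖ ^ 2 + ‖w j‖ ^ 2) / 2 := by
    refine Finset.sum_le_sum fun j _ => ?_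
    rw [norm_mul, RCLike.norm_conj]
    nlinarith [sq_nonneg (‖z j‖ - ‖w j‖)]
  rw [← Finset.sum_div, Finset.sum_add_distrib] at h
  linarith

end DruryArveson
end
end
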